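/- Let R be a commutative Noetherian ring. Then R is Gorenstein with finite Krull dimension (i.e. id_R(R) < ∞) if and only if ca_R(M) = coca_R(M) for every finitely generated R-module M with Rfd_R(M) = 0. -/

import Mathlib

open CategoryTheory

noncomputable section

universe u

variable (R : Type u) [CommRing R]

/-- The `n`-th Ext group of two `R`-modules, as an `R`-module. -/
abbrev ExtM (n : ℕ) (M N : ModuleCat.{u} R) : ModuleCat.{u} R :=
  ((Ext R (ModuleCat.{u} R) n).obj (Opposite.op M)).obj N

/-- The `n`-th cohomological annihilator of a module `M`:
elements `r` with `r • Ext^i(M, N) = 0` for all `i ≥ n` and all finitely generated `N`. -/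
def caN (n : ℕ) (M : ModuleCat.{u} R) : Ideal R where
  carrier := {r | ∀ i, n ≤ i → ∀ N : ModuleCat.{u} R, Module.Finite R N →
    ∀ x : ExtM R i M N, r • x = 0}
  zero_mem' := by intro i _ N _ x; simp
  add_mem' := by
    intro a b ha hb i hi N hN x
    rw [add_smul, ha i hi N hN x, hb i hi N hN x, add_zero]
  smul_mem' := by
    intro c r hr i hi N hN x
    simp only [smul_eq_mul, mul_smul, hr i hi N hN x, smul_zero]

/-- The cohomological annihilator `ca_R(M) = ⋃ₙ ca_R^n(M)`. -/
def ca (M : ModuleCat.{u} R) : Set R := ⋃ n : ℕ, (caN R n M : Set R)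

/-- The `n`-th co-cohomological annihilator of a module `M`. -/
def cocaN (n : ℕ) (M : ModuleCat.{u} R) : Ideal R where
  carrier := {r | ∀ i, n ≤ i → ∀ N : ModuleCat.{u} R, Module.Finite R N →
    ∀ x : ExtM R i N M, r • x = 0}
  zero_mem' := by intro i _ N _ x; simp
  add_mem' := by
    intro a b ha hb i hi N hN x
    rw [add_smul, ha i hi N hN x, hb i hi N hN x, add_zero]
  smul_mem' := by
    intro c r hr i hi N hN x
    simp only [smul_eq_mul, mul_smul, hr i hi N hN x, smul_zero]

/-- The co-cohomological annihilator `coca_R(M) = ⋃ₙ coca_R^n(M)`. -/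
def coca (M : ModuleCat.{u} R) : Set R := ⋃ n : ℕ, (cocaN R n M : Set R)

/-- `M` has projective dimension at most `n`: `Ext^i(M, -) = 0` for all `i > n`. -/
def projDimLE (n : ℕ) (M : ModuleCat.{u} R) : Prop :=
  ∀ i : ℕ, n < i → ∀ N : ModuleCat.{u} R, Subsingleton (ExtM R i M N)

/-- `M` has injective dimension at most `n`: `Ext^i(-, M) = 0` for all `i > n`. -/
def injDimLE (n : ℕ) (M : ModuleCat.{u} R) : Prop :=
  ∀ i : ℕ, n < i → ∀ N : ModuleCat.{u} R, Subsingleton (ExtM R i N M)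

/-- `K` is an `n`-th syzygy of `M` with respect to resolutions by
finitely generated projective modules. -/
def IsSyz : ℕ → ModuleCat.{u} R → ModuleCat.{u} R → Prop
  | 0, M, K => Nonempty (K ≃ₗ[R] M)
  | n + 1, M, K => ∃ (L P : ModuleCat.{u} R), IsSyz n M L ∧
      Module.Finite R P ∧ Module.Projective R P ∧
      ∃ f : P →ₗ[R] L, Function.Surjective f ∧ Nonempty (K ≃ₗ[R] LinearMap.ker f)

/-- `X` is a direct summand of `Y`. -/
def IsSummand (X Y : ModuleCat.{u} R) : Prop :=
  ∃ (i : X →ₗ[R] Y) (p : Y →ₗ[R] X), p.comp i = LinearMap.id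

/-- `X` is a direct summand of a finite direct sum of copies of `G`. -/
def IsSummandOfCopies (G X : ModuleCat.{u} R) : Prop :=
  ∃ k : ℕ, IsSummand R X (ModuleCat.of R (Fin k → G))

/-- The subcategories `thickⁿ(G)` of `mod R`. -/
def thickN (G : ModuleCat.{u} R) : ℕ → Set (ModuleCat.{u} R)
  | 0 => {X | Subsingleton X}
  | n + 1 => {X | ∃ (Y Y₁ Y₂ : ModuleCat.{u} R) (f : Y₁ →ₗ[R] Y) (g : Y →ₗ[R] Y₂),
      Function.Injective f ∧ Function.Surjective g ∧ LinearMap.ker g = LinearMap.range f ∧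
      ((Y₁ ∈ thickN G n ∧ IsSummandOfCopies R G Y₂) ∨
        (IsSummandOfCopies R G Y₁ ∧ Y₂ ∈ thickN G n)) ∧
      IsSummand R X Y}

/-- The balls `|G|ₙ` of Dao–Takahashi. -/
def ballN (G : ModuleCat.{u} R) : ℕ → Set (ModuleCat.{u} R)
  | 0 => {X | Subsingleton X}
  | n + 1 => {Y | ∃ (Y' Y₁ Y₂ : ModuleCat.{u} R)
      (f : Y₁ →ₗ[R] (ModuleCat.of R (Y × Y'))) (g : (ModuleCat.of R (Y × Y')) →ₗ[R] Y₂),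
      Function.Injective f ∧ Function.Surjective g ∧ LinearMap.ker g = LinearMap.range f ∧
      Y₁ ∈ ballN G n ∧ IsSummandOfCopies R G Y₂}

/-- A regular local ring: a Noetherian local ring whose maximal ideal can be
generated by `dim R` elements. -/
def IsRegularLocal (A : Type u) [CommRing A] [IsLocalRing A] : Prop :=
  IsNoetherianRing A ∧ ∃ s : Finset A, Ideal.span (↑s : Set A) = IsLocalRing.maximalIdeal A ∧
    (s.card : WithBot ℕ∞) = ringKrullDim A

/-- The localization of a module at a prime, as a module category object over the local ring. -/
abbrev locMod (p : PrimeSpectrum R) (M : ModuleCat.{u} R) :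
    ModuleCat.{u} (Localization.AtPrime p.asIdeal) :=
  ModuleCat.of (Localization.AtPrime p.asIdeal) (LocalizedModule p.asIdeal.primeCompl M)

/-- Depth of a module over a local ring, via vanishing of `Ext` from the residue field. -/
def depthE (A : Type u) [CommRing A] [IsLocalRing A] (N : ModuleCat.{u} A) : ℕ∞ :=
  sInf ((fun n : ℕ => (n : ℕ∞)) ''
    {n : ℕ | ¬ Subsingleton (ExtM A n (ModuleCat.of A (IsLocalRing.ResidueField A)) N)})

/-- The large restricted flat dimension of `M`. -/
def rfdE (M : ModuleCat.{u} R) : ℕ∞ :=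
  ⨆ p : PrimeSpectrum R,
    (depthE (Localization.AtPrime p.asIdeal)
        (ModuleCat.of (Localization.AtPrime p.asIdeal) (Localization.AtPrime p.asIdeal)) -
      depthE (Localization.AtPrime p.asIdeal) (locMod R p M))

/-- `r • f` factors through a finitely generated projective module. -/
def FactorsThroughProj (M : ModuleCat.{u} R) (f : M →ₗ[R] M) : Prop :=
  ∃ P : ModuleCat.{u} R, Module.Projective R P ∧ Module.Finite R P ∧
    ∃ (g : M →ₗ[R] P) (h : P →ₗ[R] M), h.comp g = f

/-- The annihilator of the stable endomorphism ring of `M`. -/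
def annStableEnd (M : ModuleCat.{u} R) : Set R :=
  {r | ∀ f : M →ₗ[R] M, FactorsThroughProj R M (r • f)}

/-- A resolving subcategory of `mod R`. -/
def IsResolving (C : Set (ModuleCat.{u} R)) : Prop :=
  (∀ P : ModuleCat.{u} R, Module.Finite R P → Module.Projective R P → P ∈ C) ∧
  (∀ X Y : ModuleCat.{u} R, Y ∈ C → IsSummand R X Y → X ∈ C) ∧
  (∀ (Y Y₁ Y₂ : ModuleCat.{u} R) (f : Y₁ →ₗ[R] Y) (g : Y →ₗ[R] Y₂),
    Function.Injective f → Function.Surjective g → LinearMap.ker g = LinearMap.range f →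
    Y₁ ∈ C → Y₂ ∈ C → Y ∈ C) ∧
  (∀ X ∈ C, ∀ K : ModuleCat.{u} R, IsSyz R 1 X K → K ∈ C)

/-- The smallest resolving subcategory containing `G`. -/
def resCl (G : ModuleCat.{u} R) : Set (ModuleCat.{u} R) :=
  ⋂₀ {C | IsResolving R C ∧ G ∈ C}

end

/-!
Since `R` is projective, `1 ∈ ca R R`, while `1 ∈ coca R M` says that `Ext^i(-, M)` vanishes on
finitely generated modules for large `i`, which by Baer's criterion means that `M` has finite
injective dimension. So `ca R R = coca R R` already forces `id R < ∞`.

Conversely, let `Ext^i(-, R) = 0` for `i ≥ d`. Splicing the syzygy sequences of a finitely generated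
module `M` gives classes `ε ∈ Ext^n(M, Ωⁿ M)` such that `x ↦ x ∘ ε` is injective on `Ext^i(N, M)`
for `i ≥ d`, because finitely generated projectives have injective dimension `< d`. An `r` with
`r • ε = 0` therefore annihilates `Ext^i(N, M)`, whence `ca R M ⊆ coca R M`.

For the other inclusion, dimension shifting replaces `M` by a high syzygy, so that `Ext^i(M, R) =
0` for all `i > 0`. Then `M*` has the same property, `M` is reflexive, and dualizing a surjection
from a free module onto `M*` embeds `M` into a projective with cokernel `Ω⁻¹ M` of the same kind.
Splicing these sequences gives `ε ∈ Ext^n(Ω⁻ⁿ M, M)` with `x ↦ ε ∘ x` injective on `Ext^i(M, N)`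
for `i > 0`, and the same argument shows `coca R M ⊆ ca R M`.
-/

universe w

section DimensionShifting

open Abelian

variable {C : Type*} [Category* C] [Abelian C] [HasExt.{w} C]

lemma subsingleton_ext_of_projective (P Y : C) [Projective P] {i : ℕ} (hi : 0 < i) :
    Subsingleton (Ext P Y i) := by
  obtain ⟨i, rfl⟩ := Nat.exists_eq_add_one.2 hi
  exact subsingleton_of_forall_eq 0 Ext.eq_zero_of_projective

variable {S : ShortComplex C} (hS : S.ShortExact)
include hS

lemma injective_postcomp_extClass (N : C) {i j : ℕ} (h : i + 1 = j)
    [Subsingleton (Ext N S.X₂ i)] : Function.Injective (hS.extClass.postcomp N h) := by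
  refine (injective_iff_map_eq_zero _).2 fun x hx ↦ ?_
  obtain ⟨y, rfl⟩ := Ext.covariant_sequence_exact₃ N hS x h hx
  rw [Subsingleton.elim y 0, Ext.zero_comp]

lemma surjective_postcomp_extClass (N : C) {i j : ℕ} (h : i + 1 = j)
    [Subsingleton (Ext N S.X₂ j)] : Function.Surjective (hS.extClass.postcomp N h) :=
  fun x ↦ Ext.covariant_sequence_exact₁ N hS x (Subsingleton.elim _ _) h

lemma injective_precomp_extClass (Y : C) {i j : ℕ} (h : 1 + i = j)
    [Subsingleton (Ext S.X₂ Y i)] : Function.Injective (hS.extClass.precomp Y h) := by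
  refine (injective_iff_map_eq_zero _).2 fun x hx ↦ ?_
  obtain ⟨y, rfl⟩ := Ext.contravariant_sequence_exact₁ hS Y x h hx
  rw [Subsingleton.elim y 0, Ext.comp_zero]

lemma surjective_precomp_extClass (Y : C) {i j : ℕ} (h : 1 + i = j)
    [Subsingleton (Ext S.X₂ Y j)] : Function.Surjective (hS.extClass.precomp Y h) :=
  fun x ↦ Ext.contravariant_sequence_exact₃ hS Y x (Subsingleton.elim _ _) h

lemma subsingleton_ext_X₁_of_subsingleton_ext_X₃ [Projective S.X₂] (Y : C) {i : ℕ} (hi : 0 < i)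
    [Subsingleton (Ext S.X₃ Y (1 + i))] : Subsingleton (Ext S.X₁ Y i) :=
  have := subsingleton_ext_of_projective S.X₂ Y hi
  (injective_precomp_extClass hS Y (rfl : 1 + i = 1 + i)).subsingleton

lemma exists_f_comp_eq_of_subsingleton_ext_one {Y : C} [Subsingleton (Ext S.X₃ Y 1)]
    (φ : S.X₁ ⟶ Y) : ∃ ψ : S.X₂ ⟶ Y, S.f ≫ ψ = φ := by
  obtain ⟨x, hx⟩ := Ext.contravariant_sequence_exact₁ hS Y (Ext.mk₀ φ) (add_zero 1)
    (Subsingleton.elim _ _)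
  obtain ⟨ψ, rfl⟩ := (Ext.mk₀_bijective _ _).surjective x
  rw [Ext.mk₀_comp_mk₀] at hx
  exact ⟨ψ, (Ext.mk₀_bijective _ _).injective hx⟩

lemma subsingleton_ext_one_of_forall_exists_f_comp_eq {Y : C} [Subsingleton (Ext S.X₂ Y 1)]
    (h : ∀ φ : S.X₁ ⟶ Y, ∃ ψ : S.X₂ ⟶ Y, S.f ≫ ψ = φ) : Subsingleton (Ext S.X₃ Y 1) := by
  refine subsingleton_of_forall_eq 0 fun x ↦ ?_
  obtain ⟨y, rfl⟩ := surjective_precomp_extClass hS Y (add_zero 1) x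
  obtain ⟨φ, rfl⟩ := (Ext.mk₀_bijective _ _).surjective y
  obtain ⟨ψ, rfl⟩ := h φ
  rw [← Ext.mk₀_comp_mk₀]
  exact hS.extClass_comp_assoc _ (h := add_zero 1)

end DimensionShifting

section ExtComparison

variable {R : Type*} [Ring R] {C : Type*} [Category* C] [Abelian C] [Linear R C]
  [HasExt.{w} C]

lemma smul_extMk {X Y : C} (P : ProjectiveResolution X) {n m : ℕ} (r : R)
    (f : P.complex.X n ⟶ Y) (hm : n + 1 = m) (hf : P.complex.d m n ≫ f = 0) :
    r • P.extMk f m hm hf =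
      P.extMk (r • f) m hm (by rw [Linear.comp_smul, hf, smul_zero]) := by
  simp only [Abelian.Ext.smul_eq_comp_mk₀, ProjectiveResolution.extMk_comp_mk₀, Linear.comp_smul,
    Category.comp_id]

/-- The map sending a cocycle of `Hom(P, Y)` to its class in `Ext`, for a projective resolution
`P` of `X`. -/
noncomputable def extOfCocycle {X : C} (P : ProjectiveResolution X) (Y : C) (n : ℕ) :
    LinearMap.ker (((P.complex.linearYonedaObj R Y).d n (n + 1)).hom) →ₗ[R]
      Abelian.Ext X Y n where
  toFun f := P.extMk f.1 (n + 1) rfl f.2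
  map_add' f g := (P.add_extMk f.1 g.1 (n + 1) rfl f.2 g.2).symm
  map_smul' r f := (smul_extMk P r f.1 rfl f.2).symm

lemma surjective_extOfCocycle {X : C} (P : ProjectiveResolution X) (Y : C) (n : ℕ) :
    Function.Surjective (extOfCocycle (R := R) P Y n) := fun x ↦ by
  obtain ⟨f, hf, rfl⟩ := P.extMk_surjective x (n + 1) rfl
  exact ⟨⟨f, hf⟩, rfl⟩

/-- The comparison, in positive degrees, between `Ext` as a derived functor of `Hom` and `Ext` as
morphisms in the derived category. The long exact sequences are only available for the latter. -/
noncomputable def extSuccLinearEquiv [EnoughProjectives C] (X Y : C) (n : ℕ) :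
    (((Ext R C (n + 1)).obj (Opposite.op X)).obj Y : ModuleCat R) ≃ₗ[R]
      Abelian.Ext X Y (n + 1) :=
  let P := projectiveResolution X
  let K := P.complex.linearYonedaObj R Y
  let S := K.sc' n (n + 1) (n + 2)
  (P.isoExt (R := R) (n + 1) Y ≪≫ ShortComplex.homologyMapIso
      (K.isoSc' n (n + 1) (n + 2) (by simp) (by simp)) ≪≫
      S.moduleCatHomologyIso).toLinearEquiv ≪≫ₗ
    Submodule.quotEquivOfEq _ (LinearMap.ker (extOfCocycle (R := R) P Y (n + 1))) (by
      ext f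
      refine Iff.trans ?_ (P.extMk_eq_zero_iff f.1 (n + 2) rfl f.2 n rfl).symm
      exact exists_congr fun g ↦ Subtype.ext_iff) ≪≫ₗ
    (extOfCocycle (R := R) P Y (n + 1)).quotKerEquivOfSurjective
      (surjective_extOfCocycle P Y (n + 1))

end ExtComparison

section InjectiveDimension

open Abelian Limits

variable {R : Type u} [CommRing R]

lemma hasInjectiveDimensionLT_pi {ι : Type} [Finite ι] (X : ι → ModuleCat.{u} R) (d : ℕ)
    [∀ j, HasInjectiveDimensionLT (X j) d] :
    HasInjectiveDimensionLT (ModuleCat.of R (∀ j, X j)) d := by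
  have := Fintype.ofFinite ι
  have : HasInjectiveDimensionLT (⨁ X) d := HasInjectiveDimensionLT.mk fun i hi N x ↦
    (Ext.addEquivBiproduct N (biproduct.isBilimit X) i).injective <| funext fun _ ↦
      (HasInjectiveDimensionLT.subsingleton _ d i hi N).elim _ _
  exact hasInjectiveDimensionLT_of_iso (ModuleCat.biproductIsoPi X) d

lemma hasInjectiveDimensionLT_of_finite_projective (P : ModuleCat.{u} R) [Module.Finite R P]
    [Module.Projective R P] (d : ℕ) [HasInjectiveDimensionLT (ModuleCat.of R R) d] :
    HasInjectiveDimensionLT P d := by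
  obtain ⟨k, f, g, -, -, hfg⟩ := Module.Finite.exists_comp_eq_id_of_projective R P
  have hP : Retract P (ModuleCat.of R (Fin k → R)) :=
    { i := ModuleCat.ofHom g
      r := ModuleCat.ofHom f
      retract := ModuleCat.hom_ext hfg }
  have := hasInjectiveDimensionLT_pi (fun _ : Fin k ↦ ModuleCat.of R R) d
  exact hP.hasInjectiveDimensionLT d

lemma injective_of_forall_finite_subsingleton_ext_one (X : ModuleCat.{u} R)
    (h : ∀ N : ModuleCat.{u} R, Module.Finite R N → Subsingleton (Ext N X 1)) : Injective X := by
  rw [← Module.injective_iff_injective_object, ← Module.Baer.iff_injective]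
  intro I g
  have := h (ModuleCat.of R (R ⧸ I)) (Module.Finite.quotient R I)
  obtain ⟨ψ, hψ⟩ := exists_f_comp_eq_of_subsingleton_ext_one
    (LinearMap.shortExact_shortComplexKer I.mkQ_surjective)
    (ModuleCat.ofHom (g ∘ₗ (LinearEquiv.ofEq _ _ I.ker_mkQ).toLinearMap))
  exact ⟨ψ.hom, fun x hx ↦
    LinearMap.congr_fun (congrArg ModuleCat.Hom.hom hψ) ⟨x, by rwa [I.ker_mkQ]⟩⟩

lemma hasInjectiveDimensionLE_of_forall_finite (n : ℕ) (X : ModuleCat.{u} R)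
    (h : ∀ N : ModuleCat.{u} R, Module.Finite R N → Subsingleton (Ext N X (n + 1))) :
    HasInjectiveDimensionLE X n := by
  induction n generalizing X with
  | zero =>
    exact injective_iff_hasInjectiveDimensionLT_one.1
      (injective_of_forall_finite_subsingleton_ext_one X h)
  | succ n ih =>
    have hS : (ShortComplex.mk _ _ (cokernel.condition (Injective.ι X))).ShortExact :=
      { exact := ShortComplex.exact_cokernel _ }
    refine (hS.hasInjectiveDimensionLT_X₃_iff n inferInstance).1 (ih _ fun N hN ↦ ?_)
    have := h N hN
    have := HasInjectiveDimensionLT.subsingleton (Injective.under X) 1 (n + 1) (by lia) N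
    exact (injective_postcomp_extClass hS N (rfl : n + 1 + 1 = n + 2)).subsingleton

lemma injDimLE_iff_hasInjectiveDimensionLE (n : ℕ) (M : ModuleCat.{u} R) :
    injDimLE R n M ↔ HasInjectiveDimensionLE M n := by
  constructor
  · intro h
    refine HasInjectiveDimensionLT.mk fun i hi N x ↦ ?_
    obtain ⟨i, rfl⟩ := Nat.exists_eq_add_one.2 (Nat.zero_lt_of_lt hi)
    have := h (i + 1) hi N
    exact (extSuccLinearEquiv (R := R) N M i).symm.subsingleton.elim x 0
  · intro h i hi N
    obtain ⟨i, rfl⟩ := Nat.exists_eq_add_one.2 (Nat.zero_lt_of_lt hi)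
    have := HasInjectiveDimensionLT.subsingleton M (n + 1) (i + 1) hi N
    exact (extSuccLinearEquiv (R := R) N M i).subsingleton

end InjectiveDimension

section CohomologicalAnnihilator

open Abelian

variable {R : Type u} [CommRing R]

lemma forall_extM_smul_eq_zero_iff (r : R) {i : ℕ} (hi : 0 < i) (M N : ModuleCat.{u} R) :
    (∀ x : ExtM R i M N, r • x = 0) ↔ ∀ x : Ext M N i, r • x = 0 := by
  obtain ⟨i, rfl⟩ := Nat.exists_eq_add_one.2 hi
  simpa only [Module.mem_annihilator] using
    SetLike.ext_iff.1 (extSuccLinearEquiv (R := R) M N i).annihilator_eq r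

lemma mem_ca_iff {M : ModuleCat.{u} R} {r : R} :
    r ∈ ca R M ↔ ∃ n, ∀ i, n < i → ∀ N : ModuleCat.{u} R, Module.Finite R N →
      ∀ x : Ext M N i, r • x = 0 := by
  refine Set.mem_iUnion.trans ⟨fun ⟨n, hn⟩ ↦ ⟨n, fun i hi N hN ↦ ?_⟩,
    fun ⟨n, hn⟩ ↦ ⟨n + 1, fun i hi N hN ↦ ?_⟩⟩
  · exact (forall_extM_smul_eq_zero_iff r (by lia) M N).1 (hn i hi.le N hN)
  · exact (forall_extM_smul_eq_zero_iff r (by lia) M N).2 (hn i hi N hN)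

lemma mem_coca_iff {M : ModuleCat.{u} R} {r : R} :
    r ∈ coca R M ↔ ∃ n, ∀ i, n < i → ∀ N : ModuleCat.{u} R, Module.Finite R N →
      ∀ x : Ext N M i, r • x = 0 := by
  refine Set.mem_iUnion.trans ⟨fun ⟨n, hn⟩ ↦ ⟨n, fun i hi N hN ↦ ?_⟩,
    fun ⟨n, hn⟩ ↦ ⟨n + 1, fun i hi N hN ↦ ?_⟩⟩
  · exact (forall_extM_smul_eq_zero_iff r (by lia) N M).1 (hn i hi.le N hN)
  · exact (forall_extM_smul_eq_zero_iff r (by lia) N M).2 (hn i hi N hN)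

lemma one_mem_ca_of_projective (P : ModuleCat.{u} R) [Projective P] : 1 ∈ ca R P :=
  mem_ca_iff.2 ⟨0, fun _ hi N _ _ ↦ (subsingleton_ext_of_projective P N hi).elim _ _⟩

lemma one_mem_coca_iff {M : ModuleCat.{u} R} :
    1 ∈ coca R M ↔ ∃ n, HasInjectiveDimensionLE M n := by
  refine mem_coca_iff.trans ⟨fun ⟨n, hn⟩ ↦ ⟨n, ?_⟩, fun ⟨n, _⟩ ↦ ⟨n, fun i hi N _ x ↦ ?_⟩⟩
  · refine hasInjectiveDimensionLE_of_forall_finite n M fun N hN ↦ ?_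
    exact subsingleton_of_forall_eq 0 fun x ↦ by simpa using hn (n + 1) n.lt_succ_self N hN x
  · rw [x.eq_zero_of_hasInjectiveDimensionLT (n + 1) hi, smul_zero]

lemma ca_X₁_subset_ca_X₃ {S : ShortComplex (ModuleCat.{u} R)} (hS : S.ShortExact)
    [Projective S.X₂] : ca R S.X₁ ⊆ ca R S.X₃ := by
  intro r hr
  obtain ⟨n, hn⟩ := mem_ca_iff.1 hr
  refine mem_ca_iff.2 ⟨n + 1, fun i hi N hN x ↦ ?_⟩
  obtain ⟨i, rfl⟩ := Nat.exists_eq_add_one.2 (Nat.zero_lt_of_lt hi)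
  have := subsingleton_ext_of_projective S.X₂ N (Nat.zero_lt_of_lt hi)
  obtain ⟨y, rfl⟩ := surjective_precomp_extClass hS N (add_comm 1 i) x
  change r • hS.extClass.comp y (add_comm 1 i) = 0
  rw [← Ext.comp_smul, hn i (by lia) N hN, Ext.comp_zero]

lemma coca_X₃_subset_coca_X₁ {S : ShortComplex (ModuleCat.{u} R)} (hS : S.ShortExact) (d : ℕ)
    [HasInjectiveDimensionLT S.X₂ d] : coca R S.X₃ ⊆ coca R S.X₁ := by
  intro r hr
  obtain ⟨n, hn⟩ := mem_coca_iff.1 hr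
  refine mem_coca_iff.2 ⟨n + d + 1, fun i hi N hN x ↦ ?_⟩
  obtain ⟨i, rfl⟩ := Nat.exists_eq_add_one.2 (Nat.zero_lt_of_lt hi)
  have := HasInjectiveDimensionLT.subsingleton S.X₂ d (i + 1) (by lia) N
  obtain ⟨y, rfl⟩ := surjective_postcomp_extClass hS N rfl x
  change r • y.comp hS.extClass rfl = 0
  rw [← Ext.smul_comp, hn i (by lia) N hN, Ext.zero_comp]

end CohomologicalAnnihilator

section Syzygy

open Abelian

variable {R : Type u} [CommRing R] [IsNoetherianRing R]

lemma exists_shortExact_of_finite (M : ModuleCat.{u} R) [Module.Finite R M] :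
    ∃ (K P : ModuleCat.{u} R) (f : K ⟶ P) (g : P ⟶ M) (w : f ≫ g = 0),
      (ShortComplex.mk f g w).ShortExact ∧ Module.Finite R K ∧ Module.Finite R P ∧
        Module.Projective R P := by
  obtain ⟨k, f, hf⟩ := Module.Finite.exists_fin' R M
  exact ⟨_, _, _, _, _, LinearMap.shortExact_shortComplexKer hf,
    inferInstanceAs (Module.Finite R (LinearMap.ker f)),
    inferInstanceAs (Module.Finite R (Fin k → R)),
    inferInstanceAs (Module.Projective R (Fin k → R))⟩

lemma exists_ext_injective_postcomp (d : ℕ) [HasInjectiveDimensionLT (ModuleCat.of R R) d]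
    (M : ModuleCat.{u} R) [Module.Finite R M] (n : ℕ) :
    ∃ K : ModuleCat.{u} R, Module.Finite R K ∧ ∃ ε : Ext M K n,
      ∀ (N : ModuleCat.{u} R) {i j : ℕ} (h : i + n = j), d ≤ i →
        Function.Injective (ε.postcomp N h) := by
  induction n with
  | zero =>
    refine ⟨M, ‹_›, Ext.mk₀ (𝟙 M), fun N i j h _ x y hxy ↦ ?_⟩
    obtain rfl : i = j := h
    simpa using hxy
  | succ n ih =>
    obtain ⟨L, _, ε, hε⟩ := ih
    obtain ⟨K, P, f, g, w, hS, hK, _, _⟩ := exists_shortExact_of_finite L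
    refine ⟨K, hK, ε.comp hS.extClass rfl, fun N i j h hi x y hxy ↦ ?_⟩
    have := hasInjectiveDimensionLT_of_finite_projective P d
    have := HasInjectiveDimensionLT.subsingleton P d (i + n) (by lia) N
    refine hε N rfl hi (injective_postcomp_extClass hS N h ?_)
    exact (Ext.comp_assoc x ε hS.extClass rfl rfl (by lia)).trans
      (hxy.trans (Ext.comp_assoc y ε hS.extClass rfl rfl (by lia)).symm)

lemma ca_subset_coca (d : ℕ) [HasInjectiveDimensionLT (ModuleCat.of R R) d]
    (M : ModuleCat.{u} R) [Module.Finite R M] : ca R M ⊆ coca R M := by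
  intro r hr
  obtain ⟨n, hn⟩ := mem_ca_iff.1 hr
  obtain ⟨K, hK, ε, hε⟩ := exists_ext_injective_postcomp d M (n + 1)
  refine mem_coca_iff.2 ⟨d, fun i hi N _ x ↦ (injective_iff_map_eq_zero _).1 (hε N rfl hi.le) _ ?_⟩
  change (r • x).comp ε rfl = 0
  rw [Ext.smul_comp, ← Ext.comp_smul, hn (n + 1) n.lt_succ_self K hK, Ext.comp_zero]

end Syzygy

section Dual

open Abelian

variable {R : Type u} [CommRing R]

lemma injective_of_surjective_dualMap {M N : Type*} [AddCommMonoid M] [AddCommMonoid N] [Module R M]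
    [Module R N] [Module.IsReflexive R M] {f : M →ₗ[R] N} (hf : Function.Surjective f.dualMap) :
    Function.Injective f := by
  have : Function.Injective (f.dualMap.dualMap ∘ₗ Module.Dual.eval R M) :=
    (LinearMap.dualMap_injective_of_surjective hf).comp (Module.bijective_dual_eval R M).injective
  rw [Module.Dual.eval_naturality, LinearMap.coe_comp] at this
  exact this.of_comp

lemma surjective_dualMap_flip {M P : Type*} [AddCommMonoid M] [AddCommMonoid P] [Module R M]
    [Module R P] {s : P →ₗ[R] Module.Dual R M} (hs : Function.Surjective s) :
    Function.Surjective s.flip.dualMap := fun φ ↦ by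
  obtain ⟨p, rfl⟩ := hs φ
  exact ⟨Module.Dual.eval R P p, rfl⟩

/-- The `R`-dual `X₃* ⟶ X₂* ⟶ X₁*` of a short complex `X₁ ⟶ X₂ ⟶ X₃` of modules. -/
abbrev dualShortComplex (S : ShortComplex (ModuleCat.{u} R)) : ShortComplex (ModuleCat.{u} R) :=
  ModuleCat.shortComplexOfCompEqZero S.g.hom.dualMap S.f.hom.dualMap <| by
    rw [LinearMap.dualMap_comp_dualMap, ← ModuleCat.hom_comp, S.zero, ModuleCat.hom_zero]
    exact map_zero Module.Dual.transpose

variable {S : ShortComplex (ModuleCat.{u} R)} (hS : S.ShortExact)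
  [Subsingleton (Ext S.X₃ (ModuleCat.of R R) 1)]
include hS

lemma dualShortComplex_shortExact : (dualShortComplex S).ShortExact := by
  have hg : Function.Surjective S.g.hom := hS.moduleCat_surjective_g
  refine ModuleCat.shortComplex_shortExact _ ?_ (LinearMap.dualMap_injective_of_surjective hg) ?_
  · exact LinearMap.exact_lcomp_of_exact_of_surjective _
      ((ShortComplex.ShortExact.moduleCat_exact_iff_function_exact S).1 hS.exact) hg
  · intro φ
    obtain ⟨ψ, hψ⟩ := exists_f_comp_eq_of_subsingleton_ext_one hS (ModuleCat.ofHom φ)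
    exact ⟨ψ.hom, congrArg ModuleCat.Hom.hom hψ⟩

variable [Subsingleton (Ext (ModuleCat.of R (Module.Dual R S.X₁)) (ModuleCat.of R R) 1)]
  [Module.IsReflexive R S.X₂]

lemma surjective_eval_X₃ : Function.Surjective (Module.Dual.eval R S.X₃) := by
  have hS' := dualShortComplex_shortExact (dualShortComplex_shortExact hS)
  have : Function.Surjective (S.g.hom.dualMap.dualMap ∘ₗ Module.Dual.eval R S.X₂) :=
    hS'.moduleCat_surjective_g.comp (Module.bijective_dual_eval R S.X₂).surjective
  rw [Module.Dual.eval_naturality, LinearMap.coe_comp] at this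
  exact this.of_comp

lemma injective_eval_X₃_of_surjective_eval_X₁
    (h : Function.Surjective (Module.Dual.eval R S.X₁)) :
    Function.Injective (Module.Dual.eval R S.X₃) := by
  have hS' := dualShortComplex_shortExact (dualShortComplex_shortExact hS)
  exact LinearMap.injective_of_surjective_of_injective_of_right_exact
    S.f.hom S.g.hom S.f.hom.dualMap.dualMap S.g.hom.dualMap.dualMap _ _ _
    (Module.Dual.eval_naturality _) (Module.Dual.eval_naturality _)
    ((ShortComplex.ShortExact.moduleCat_exact_iff_function_exact S).1 hS.exact)
    ((ShortComplex.ShortExact.moduleCat_exact_iff_function_exact _).1 hS'.exact)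
    h (Module.bijective_dual_eval R S.X₂).injective hS.moduleCat_surjective_g

end Dual

section SemiGorensteinProjective

open Abelian

variable {R : Type u} [CommRing R]

/-- `M` is semi-Gorenstein-projective in the sense of Ringel and Zhang: `Ext^i(M, R) = 0` for all
`i > 0`. Finite generation, part of their definition, is kept separate. -/
def IsSemiGorensteinProjective (M : ModuleCat.{u} R) : Prop :=
  ∀ ⦃i : ℕ⦄, 0 < i → Subsingleton (Ext M (ModuleCat.of R R) i)

namespace IsSemiGorensteinProjective

lemma X₁_of_shortExact {S : ShortComplex (ModuleCat.{u} R)} (hS : S.ShortExact) [Projective S.X₂]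
    (h : IsSemiGorensteinProjective S.X₃) : IsSemiGorensteinProjective S.X₁ := fun i hi ↦
  have := h (i := 1 + i) (by lia)
  subsingleton_ext_X₁_of_subsingleton_ext_X₃ hS _ hi

lemma X₃_of_shortExact {S : ShortComplex (ModuleCat.{u} R)} (hS : S.ShortExact) [Projective S.X₂]
    (hf : Function.Surjective S.f.hom.dualMap) (h : IsSemiGorensteinProjective S.X₁) :
    IsSemiGorensteinProjective S.X₃ := by
  intro i hi
  have := subsingleton_ext_of_projective S.X₂ (ModuleCat.of R R) hi
  obtain rfl | ⟨j, hj, rfl⟩ : i = 1 ∨ ∃ j, 0 < j ∧ i = 1 + j := by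
    rcases Nat.eq_or_lt_of_le hi with rfl | hi
    exacts [.inl rfl, .inr ⟨i - 1, by lia, by lia⟩]
  · refine subsingleton_ext_one_of_forall_exists_f_comp_eq hS fun φ ↦ ?_
    obtain ⟨ψ, hψ⟩ := hf φ.hom
    exact ⟨ModuleCat.ofHom ψ, ModuleCat.hom_ext hψ⟩
  · have := h hj
    exact (surjective_precomp_extClass hS _ rfl).subsingleton

variable [IsNoetherianRing R] (d : ℕ) [HasInjectiveDimensionLT (ModuleCat.of R R) d]
  {M : ModuleCat.{u} R} [Module.Finite R M]
include d

-- Descending induction on `i`: for `0 → K → P → M → 0` exact with `P` projective, `Ext^i(M*, R)`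
-- embeds into `Ext^(i+1)(K*, R)`, and these groups vanish from degree `d` on.
lemma dual (hM : IsSemiGorensteinProjective M) :
    IsSemiGorensteinProjective (ModuleCat.of R (Module.Dual R M)) := by
  intro i hi
  obtain ⟨j, hj⟩ : ∃ j, d ≤ i + j := ⟨d, by lia⟩
  induction j generalizing i M with
  | zero => exact HasInjectiveDimensionLT.subsingleton _ d i hj _
  | succ j ih =>
    obtain ⟨K, P, f, g, w, hS, _, _, _⟩ := exists_shortExact_of_finite M
    have := hM one_pos
    have := ih (hM.X₁_of_shortExact hS) (i := 1 + i) (by lia) (by lia)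
    exact subsingleton_ext_X₁_of_subsingleton_ext_X₃ (dualShortComplex_shortExact hS) _ hi

lemma surjective_eval (hM : IsSemiGorensteinProjective M) :
    Function.Surjective (Module.Dual.eval R M) := by
  obtain ⟨K, P, f, g, w, hS, _, _, _⟩ := exists_shortExact_of_finite M
  have := hM one_pos
  have := (hM.X₁_of_shortExact hS).dual d one_pos
  exact surjective_eval_X₃ hS

lemma isReflexive (hM : IsSemiGorensteinProjective M) : Module.IsReflexive R M := by
  obtain ⟨K, P, f, g, w, hS, _, _, _⟩ := exists_shortExact_of_finite M
  have := hM one_pos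
  have := (hM.X₁_of_shortExact hS).dual d one_pos
  have hK : Function.Surjective (Module.Dual.eval R K) :=
    (hM.X₁_of_shortExact hS).surjective_eval d
  exact ⟨injective_eval_X₃_of_surjective_eval_X₁ hS hK, hM.surjective_eval d⟩

lemma exists_shortExact (hM : IsSemiGorensteinProjective M) :
    ∃ (P C : ModuleCat.{u} R) (f : M ⟶ P) (g : P ⟶ C) (w : f ≫ g = 0),
      (ShortComplex.mk f g w).ShortExact ∧ Projective P ∧ Module.Finite R C ∧
        IsSemiGorensteinProjective C := by
  have : Module.Finite R (Module.Dual R M) := Module.IsNoetherian.finite R _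
  obtain ⟨k, s, hs⟩ := Module.Finite.exists_fin' R (Module.Dual R M)
  have := hM.isReflexive d
  have hdual : Function.Surjective s.flip.dualMap := surjective_dualMap_flip hs
  have hS := ModuleCat.shortComplex_shortExact
    (ModuleCat.shortComplexOfCompEqZero s.flip (LinearMap.range s.flip).mkQ
      s.flip.exact_map_mkQ_range.linearMap_comp_eq_zero)
    s.flip.exact_map_mkQ_range (injective_of_surjective_dualMap hdual)
    (Submodule.mkQ_surjective _)
  have hP : Projective (ModuleCat.of R (Module.Dual R (Fin k → R))) := inferInstance
  exact ⟨_, _, _, _, _, hS, hP, inferInstanceAs (Module.Finite R (_ ⧸ LinearMap.range s.flip)),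
    hM.X₃_of_shortExact hS hdual⟩

lemma exists_ext_injective_precomp (hM : IsSemiGorensteinProjective M) (n : ℕ) :
    ∃ K : ModuleCat.{u} R, Module.Finite R K ∧ IsSemiGorensteinProjective K ∧ ∃ ε : Ext K M n,
      ∀ (N : ModuleCat.{u} R) {i j : ℕ} (h : n + i = j), 0 < i →
        Function.Injective (ε.precomp N h) := by
  induction n with
  | zero =>
    refine ⟨M, ‹_›, hM, Ext.mk₀ (𝟙 M), fun N i j h _ x y hxy ↦ ?_⟩
    obtain rfl : i = j := (zero_add i).symm.trans h
    simpa using hxy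
  | succ n ih =>
    obtain ⟨K, _, hK, ε, hε⟩ := ih
    obtain ⟨P, C, f, g, w, hS, _, hC, hC'⟩ := hK.exists_shortExact d
    refine ⟨C, hC, hC', hS.extClass.comp ε (add_comm 1 n), fun N i j h hi x y hxy ↦ ?_⟩
    have := subsingleton_ext_of_projective P N (i := n + i) (by lia)
    refine hε N rfl hi (injective_precomp_extClass hS N (by lia : 1 + (n + i) = j) ?_)
    exact (Ext.comp_assoc hS.extClass ε x (add_comm 1 n) rfl (by lia)).symm.trans
      (hxy.trans (Ext.comp_assoc hS.extClass ε y (add_comm 1 n) rfl (by lia)))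

lemma coca_subset_ca (hM : IsSemiGorensteinProjective M) : coca R M ⊆ ca R M := by
  intro r hr
  obtain ⟨n, hn⟩ := mem_coca_iff.1 hr
  obtain ⟨K, hK, -, ε, hε⟩ := hM.exists_ext_injective_precomp d (n + 1)
  refine mem_ca_iff.2 ⟨0, fun i hi N _ x ↦ (injective_iff_map_eq_zero _).1 (hε N rfl hi) _ ?_⟩
  change ε.comp (r • x) rfl = 0
  rw [Ext.comp_smul, ← Ext.smul_comp, hn (n + 1) n.lt_succ_self K hK, Ext.zero_comp]

end IsSemiGorensteinProjective

lemma coca_subset_ca [IsNoetherianRing R] (d : ℕ) [HasInjectiveDimensionLT (ModuleCat.of R R) d]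
    (M : ModuleCat.{u} R) [Module.Finite R M] : coca R M ⊆ ca R M := by
  obtain ⟨k, hk⟩ : ∃ k, ∀ i, k < i → Subsingleton (Ext M (ModuleCat.of R R) i) :=
    ⟨d, fun i hi ↦ HasInjectiveDimensionLT.subsingleton _ d i hi.le M⟩
  induction k generalizing M with
  | zero => exact IsSemiGorensteinProjective.coca_subset_ca d hk
  | succ k ih =>
    obtain ⟨K, P, f, g, w, hS, _, _, _⟩ := exists_shortExact_of_finite M
    have := hasInjectiveDimensionLT_of_finite_projective P d
    have hK : ∀ i, k < i → Subsingleton (Ext K (ModuleCat.of R R) i) := fun i hi ↦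
      have := hk (1 + i) (by lia)
      subsingleton_ext_X₁_of_subsingleton_ext_X₃ hS _ (Nat.zero_lt_of_lt hi)
    calc coca R M ⊆ coca R K := (coca_X₃_subset_coca_X₁ hS d :)
      _ ⊆ ca R K := ih K hK
      _ ⊆ ca R M := (ca_X₁_subset_ca_X₃ hS :)

end SemiGorensteinProjective

section RestrictedFlatDimension

lemma depthE_congr {A : Type u} [CommRing A] [IsLocalRing A] {M N : ModuleCat.{u} A} (e : M ≅ N) :
    depthE A M = depthE A N := by
  refine congrArg (fun s : Set ℕ ↦ sInf ((fun n : ℕ ↦ (n : ℕ∞)) '' s)) (Set.ext fun n ↦ ?_)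
  exact not_congr (((Ext A _ n).obj _).mapIso e).toLinearEquiv.toEquiv.subsingleton_congr

variable (R : Type u) [CommRing R]

/-- The localization of the module `R` at a prime `p` is the local ring `R_p`. -/
noncomputable def localizationIsoLocMod (p : PrimeSpectrum R) :
    ModuleCat.of (Localization.AtPrime p.asIdeal) (Localization.AtPrime p.asIdeal) ≅
      locMod R p (ModuleCat.of R R) :=
  (LinearEquiv.extendScalarsOfIsLocalization p.asIdeal.primeCompl
    (Localization.AtPrime p.asIdeal) (IsLocalizedModule.linearEquiv p.asIdeal.primeCompl
      (Algebra.linearMap R (Localization.AtPrime p.asIdeal))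
      (LocalizedModule.mkLinearMap p.asIdeal.primeCompl R))).toModuleIso

lemma rfdE_self : rfdE R (ModuleCat.of R R) = 0 := by
  refine ENat.iSup_eq_zero.2 fun p ↦ ?_
  rw [depthE_congr (localizationIsoLocMod R p), tsub_self]

end RestrictedFlatDimension

theorem stmt19_general (R : Type u) [CommRing R] [IsNoetherianRing R] :
    List.TFAE [
      ∃ n : ℕ, injDimLE R n (ModuleCat.of R R),
      ∀ M : ModuleCat.{u} R, Module.Finite R M → ca R M = coca R M,
      ca R (ModuleCat.of R R) = coca R (ModuleCat.of R R)] := by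
  tfae_have 1 → 2 := by
    rintro ⟨n, hn⟩ M hM
    have := (injDimLE_iff_hasInjectiveDimensionLE n _).1 hn
    exact (ca_subset_coca (n + 1) M).antisymm (coca_subset_ca (n + 1) M)
  tfae_have 2 → 3 := fun h ↦ h _ inferInstance
  tfae_have 3 → 1 := by
    intro h
    obtain ⟨n, hn⟩ := one_mem_coca_iff.1 (h ▸ one_mem_ca_of_projective (ModuleCat.of R R))
    exact ⟨n, (injDimLE_iff_hasInjectiveDimensionLE n _).2 hn⟩
  tfae_finish

/-- `R` is Gorenstein of finite Krull dimension iff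
`ca_R(M) = coca_R(M)` for every finitely generated `M` with `Rfd_R(M) = 0`. -/
theorem stmt19 (R : Type u) [CommRing R] [IsNoetherianRing R] :
    (∃ n : ℕ, injDimLE R n (ModuleCat.of R R)) ↔
      ∀ M : ModuleCat.{u} R, Module.Finite R M → Nontrivial M → rfdE R M = 0 →
        ca R M = coca R M := by
  refine ⟨fun h M hM _ _ ↦ ?_, fun h ↦ ?_⟩
  · exact ((stmt19_general R).out 0 1 :).1 h M hM
  obtain hR | hR := subsingleton_or_nontrivial R
  · exact ⟨0, fun _ _ _ ↦ Module.subsingleton R _⟩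
  · exact ((stmt19_general R).out 2 0).1 (h _ inferInstance hR (rfdE_self R))
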